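/- arXiv:2010.14783 — 4 statements merged into one kernel-verified Lean document; each statement's English description precedes it below -/
import Mathlib

section
/- Let α, β, ρ > 0 with β > ρ, let X be Gamma(α, β)-distributed and T exponential with rate ρ, independent. Then for every c ≥ 0, P[X + T ≥ c] = (β^α e^(−ρc)/((β−ρ)^α Γ(α))) γ(α, (β−ρ)c) + Γ(α, βc)/Γ(α). -/
/-!
By independence, conditioning on `X` gives `P[X + T ≥ c] = E[P[T ≥ c - X]]`, and the exponential
tail is `P[T ≥ y] = exp (-ρ max(y, 0))` (`expMeasure_Ici`). The expectation is therefore the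
integral of `exp (-ρ max(c - x, 0))` against the gamma density. On `(0, c]` the integrand is
`exp (-ρ c)` times a multiple of `x ^ (α - 1) * exp (-(β - ρ) x)`, and on `(c, ∞)` it is the gamma
density itself; rescaling the variable by `β - ρ` and by `β` (`lowerGamma_mul`, `upperGamma_mul`)
identifies the two parts with incomplete gamma functions.
-/

open MeasureTheory ProbabilityTheory Real Set

/-- The lower incomplete gamma function `γ(a, x) = ∫₀^x t^(a−1) e^(−t) dt`. -/
noncomputable def lowerGamma (a x : ℝ) : ℝ := ∫ t in (0:ℝ)..x, t ^ (a - 1) * Real.exp (-t)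

/-- The upper incomplete gamma function `Γ(a, x) = ∫_x^∞ t^(a−1) e^(−t) dt`. -/
noncomputable def upperGamma (a x : ℝ) : ℝ := ∫ t in Set.Ioi x, t ^ (a - 1) * Real.exp (-t)

lemma expMeasure_Ici {ρ : ℝ} (hρ : 0 < ρ) (y : ℝ) :
    expMeasure ρ (Ici y) = ENNReal.ofReal (Real.exp (-(ρ * max y 0))) := by
  have := isProbabilityMeasure_expMeasure hρ
  have hna : NullSingletonClass (expMeasure ρ) := by
    unfold expMeasure gammaMeasure; infer_instance
  rw [← ofReal_measureReal, ← compl_Iio, probReal_compl_eq_one_sub measurableSet_Iio,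
    measureReal_congr Iio_ae_eq_Iic, ← cdf_eq_real, cdf_expMeasure_eq hρ]
  split_ifs with h
  · simp [max_eq_left h]
  · simp [max_eq_right (not_le.mp h).le]

lemma lowerGamma_mul {a k c : ℝ} (hk : 0 < k) (hc : 0 ≤ c) :
    lowerGamma a (k * c) = k ^ a * ∫ x in Ioc 0 c, x ^ (a - 1) * Real.exp (-(k * x)) := by
  have h := intervalIntegral.mul_integral_comp_mul_left (a := 0) (b := c)
    (f := fun t : ℝ => t ^ (a - 1) * Real.exp (-t)) k
  rw [mul_zero] at h
  rw [lowerGamma, ← h, intervalIntegral.integral_of_le hc, ← integral_const_mul,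
    ← integral_const_mul]
  refine setIntegral_congr_fun measurableSet_Ioc fun x hx => ?_
  simp only [Real.mul_rpow hk.le hx.1.le, Real.rpow_sub_one hk.ne']
  field_simp

lemma upperGamma_mul {a k c : ℝ} (hk : 0 < k) (hc : 0 ≤ c) :
    upperGamma a (k * c) = k ^ a * ∫ x in Ioi c, x ^ (a - 1) * Real.exp (-(k * x)) := by
  have h := integral_comp_mul_left_Ioi (fun t : ℝ => t ^ (a - 1) * Real.exp (-t)) c hk
  rw [smul_eq_mul, eq_inv_mul_iff_mul_eq₀ hk.ne'] at h
  rw [upperGamma, ← h, ← integral_const_mul, ← integral_const_mul]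
  refine setIntegral_congr_fun measurableSet_Ioi fun x hx => ?_
  simp only [Real.mul_rpow hk.le (hc.trans (le_of_lt hx)), Real.rpow_sub_one hk.ne']
  field_simp

lemma integrable_gammaPDFReal {a r : ℝ} (ha : 0 < a) (hr : 0 < r) :
    Integrable (gammaPDFReal a r) := by
  refine ⟨(measurable_gammaPDFReal a r).aestronglyMeasurable, ?_⟩
  rw [hasFiniteIntegral_iff_ofReal (ae_of_all _ (gammaPDFReal_nonneg ha hr))]
  have := lintegral_gammaPDF_eq_one ha hr
  simp only [gammaPDF] at this
  simp [this]

/-- Conditioning on the gamma variable: the tail probability is the integral of the exponential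
tail at `c - x` against the gamma density. -/
lemma prob_eq_integral {Ω : Type*} [MeasurableSpace Ω]
    (μ : Measure Ω) [IsProbabilityMeasure μ]
    (α β ρ : ℝ) (hα : 0 < α) (hβ : 0 < β) (hρ : 0 < ρ)
    (X T : Ω → ℝ) (hX : Measurable X) (hT : Measurable T)
    (hXlaw : μ.map X = gammaMeasure α β)
    (hTlaw : μ.map T = expMeasure ρ)
    (hind : IndepFun X T μ) (c : ℝ) :
    (μ {ω | c ≤ X ω + T ω}).toReal =
      ∫ x, gammaPDFReal α β x * Real.exp (-(ρ * max (c - x) 0)) := by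
  have := isProbabilityMeasure_expMeasure hρ
  have := isProbabilityMeasure_gammaMeasure hα hβ
  have hS : MeasurableSet {p : ℝ × ℝ | c ≤ p.1 + p.2} :=
    measurableSet_le (by fun_prop) (by fun_prop)
  have h1 : μ {ω | c ≤ X ω + T ω} =
      ((gammaMeasure α β).prod (expMeasure ρ)) {p : ℝ × ℝ | c ≤ p.1 + p.2} := by
    rw [← hXlaw, ← hTlaw,
      ← (indepFun_iff_map_prod_eq_prod_map_map hX.aemeasurable hT.aemeasurable).mp hind,
      Measure.map_apply (hX.prodMk hT) hS]
    rfl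
  have h2 : ∀ x : ℝ, expMeasure ρ (Prod.mk x ⁻¹' {p : ℝ × ℝ | c ≤ p.1 + p.2}) =
      ENNReal.ofReal (Real.exp (-(ρ * max (c - x) 0))) := fun x => by
    rw [← expMeasure_Ici hρ]
    congr 1
    ext t
    simp [add_comm]
  rw [h1, Measure.prod_apply hS]
  simp only [h2]
  rw [gammaMeasure, lintegral_withDensity_eq_lintegral_mul _
    (show Measurable (gammaPDF α β) from (measurable_gammaPDFReal α β).ennreal_ofReal)
    (by fun_prop),
    integral_eq_lintegral_of_nonneg_ae
      (ae_of_all _ fun x => mul_nonneg (gammaPDFReal_nonneg hα hβ x) (Real.exp_pos _).le)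
      (by fun_prop)]
  congr 2
  ext x
  simp [gammaPDF, ENNReal.ofReal_mul (gammaPDFReal_nonneg hα hβ x)]

theorem prob_gamma_add_exp_ge {Ω : Type*} [MeasurableSpace Ω]
    (μ : Measure Ω) [IsProbabilityMeasure μ]
    (α β ρ : ℝ) (hα : 0 < α) (hβ : 0 < β) (hρ : 0 < ρ) (hρβ : ρ < β)
    (X T : Ω → ℝ) (hX : Measurable X) (hT : Measurable T)
    (hXlaw : μ.map X = gammaMeasure α β)
    (hTlaw : μ.map T = expMeasure ρ)
    (hind : IndepFun X T μ) :
    ∀ c : ℝ, 0 ≤ c →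
      (μ {ω | c ≤ X ω + T ω}).toReal =
        β ^ α * Real.exp (-ρ * c) / ((β - ρ) ^ α * Real.Gamma α)
            * lowerGamma α ((β - ρ) * c)
          + upperGamma α (β * c) / Real.Gamma α := by
  intro c hc
  have hk : 0 < β - ρ := sub_pos.mpr hρβ
  rw [prob_eq_integral μ α β ρ hα hβ hρ X T hX hT hXlaw hTlaw hind c,
    lowerGamma_mul hk hc, upperGamma_mul hβ hc]
  have hint : Integrable
      (fun x => gammaPDFReal α β x * Real.exp (-(ρ * max (c - x) 0))) := by
    refine (integrable_gammaPDFReal hα hβ).mul_bdd (c := 1) (by fun_prop) (ae_of_all _ fun x => ?_)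
    rw [Real.norm_eq_abs, Real.abs_exp, Real.exp_le_one_iff, neg_nonpos]
    positivity
  have h0 : ∫ x, gammaPDFReal α β x * Real.exp (-(ρ * max (c - x) 0)) =
      ∫ x in Ioi 0, gammaPDFReal α β x * Real.exp (-(ρ * max (c - x) 0)) := by
    rw [← integral_Ici_eq_integral_Ioi, setIntegral_eq_integral_of_forall_compl_eq_zero]
    intro x hx
    simp [gammaPDFReal, show ¬ 0 ≤ x from hx]
  rw [h0, ← Ioc_union_Ioi_eq_Ioi hc, setIntegral_union Ioc_disjoint_Ioi_same measurableSet_Ioi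
    hint.integrableOn hint.integrableOn]
  have hA : ∫ x in Ioc 0 c, gammaPDFReal α β x * Real.exp (-(ρ * max (c - x) 0)) =
      (β ^ α / Real.Gamma α * Real.exp (-ρ * c)) *
        ∫ x in Ioc 0 c, x ^ (α - 1) * Real.exp (-((β - ρ) * x)) := by
    rw [← integral_const_mul]
    refine setIntegral_congr_fun measurableSet_Ioc fun x hx => ?_
    simp only [gammaPDFReal, if_pos hx.1.le, max_eq_left (sub_nonneg.mpr hx.2)]
    have : Real.exp (-(β * x)) * Real.exp (-(ρ * (c - x))) =
        Real.exp (-ρ * c) * Real.exp (-((β - ρ) * x)) := by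
      rw [← Real.exp_add, ← Real.exp_add]; ring_nf
    linear_combination (β ^ α / Real.Gamma α * x ^ (α - 1)) * this
  have hB : ∫ x in Ioi c, gammaPDFReal α β x * Real.exp (-(ρ * max (c - x) 0)) =
      (β ^ α / Real.Gamma α) * ∫ x in Ioi c, x ^ (α - 1) * Real.exp (-(β * x)) := by
    rw [← integral_const_mul]
    refine setIntegral_congr_fun measurableSet_Ioi fun x hx => ?_
    have hx' : c < x := hx
    simp only [gammaPDFReal, if_pos (hc.trans hx'.le), max_eq_right (sub_nonpos.mpr hx'.le)]
    simp [mul_assoc]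
  rw [hA, hB]
  have hG := (Real.Gamma_pos_of_pos hα).ne'
  have hkα := (Real.rpow_pos_of_pos hk α).ne'
  field_simp
end

section
/- Let α, β, ρ, T_c > 0. Then ∫₀^{T_c} [ (β^α/Γ(α)) Σ_{n=0}^∞ ((ρ−β)ⁿ/(n!(α+n))) Γ(α+n+1, ρ(T_c−x))/ρ^{α+n+1} ] · (β^α x^(α−1) e^(−βx)/Γ(α)) dx = (β^{2α}/Γ(α)²) Σ_{n=0}^∞ ((ρ−β)ⁿ/(n!(α+n)ρ^{α+n+1})) [ (Γ(α+n+1)/β^α) γ(α, βT_c) − Σ_{k=0}^∞ ((−1)^k (ρT_c)^{α+n+k+1}/(k!(α+n+k+1))) T_c^α B(α+n+k+2, α) ₁F₁(α; 2α+n+k+2; −βT_c) ]. -/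
/-!
Write `w(x) = x^(α-1) e^(-βx)` and `A n = (ρ-β)^n / (n! (α+n) ρ^(α+n+1))`. Up to the common constant
`β^(2α)/Γ(α)²`, the left side is `∫ (∑ₙ A n · Γ(α+n+1, ρ(T-x))) w(x) dx`.

* For each `n` the bracket on the right is `∫ Γ(α+n+1, ρ(T-x)) w(x) dx`
  (`integral_upperGamma_weight`): write `Γ(s, y) = Γ(s) - γ(s, y)`, expand `γ(s, y)` into its power
  series (`hasSum_lowerGamma`), and integrate termwise; each term is an Euler integral
  `∫ (T-x)^c w(x) dx`, which expanding `e^(-βx)` turns into a Beta value times `₁F₁`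
  (`integral_weight_hyp1F1`).
* If `|ρ-β| < ρ`, the bound `Γ(s, y) ≤ Γ(s)` and the ratio test give a summable majorant
  (`summable_coeff`), so the sum over `n` and the integral commute.
* If `ρ ≤ |ρ-β|`, the bound `e^(-y) Γ(s) ≤ Γ(s, y)` compares the absolute values of the terms on
  either side with the harmonic series (`not_summable_coeff`). The series over `n` is then summable
  on neither side, both `tsum`s take the default value `0`, and the identity reads `0 = 0`.
-/

open MeasureTheory Real Set

/-- The Beta function `B(a, b) = Γ(a)Γ(b)/Γ(a+b)`. -/
noncomputable def betaFn (a b : ℝ) : ℝ := Real.Gamma a * Real.Gamma b / Real.Gamma (a + b)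

/-- The rising factorial (Pochhammer symbol) `(a)_k = a(a+1)⋯(a+k−1)`. -/
noncomputable def poch (a : ℝ) (k : ℕ) : ℝ := ∏ i ∈ Finset.range k, (a + i)

/-- The confluent hypergeometric function `₁F₁(a; b; z) = Σ_k ((a)_k/(b)_k) z^k/k!`. -/
noncomputable def hyp1F1 (a b z : ℝ) : ℝ :=
  ∑' k : ℕ, (poch a k / poch b k) * z ^ k / (k.factorial : ℝ)

/-! ### Series expansions of `γ` and of Euler's integral -/

/-- Termwise integration against an integrable weight `w` of a series of continuous functions that
is dominated by a summable sequence of constants. -/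
lemma hasSum_integral_weight {w : ℝ → ℝ} {T : ℝ} (hT : 0 ≤ T)
    (hw : IntervalIntegrable w volume 0 T) {f : ℕ → ℝ → ℝ} {g : ℝ → ℝ} {c : ℕ → ℝ}
    (hf : ∀ n, ContinuousOn (f n) (Icc 0 T)) (hb : ∀ n, ∀ x ∈ Ioc 0 T, |f n x| ≤ c n)
    (hc : Summable c) (hg : ∀ x ∈ Ioc 0 T, HasSum (fun n => f n x) (g x)) :
    HasSum (fun n => ∫ x in (0:ℝ)..T, f n x * w x) (∫ x in (0:ℝ)..T, g x * w x) := by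
  apply intervalIntegral.hasSum_integral_of_dominated_convergence (fun n x => c n * |w x|)
  · intro n
    have h : IntervalIntegrable (fun x => f n x * w x) volume 0 T :=
      hw.continuousOn_mul (by rw [uIcc_of_le hT]; exact hf n)
    exact h.def'.aestronglyMeasurable
  · intro n
    refine ae_of_all _ fun x hx => ?_
    rw [uIoc_of_le hT] at hx
    rw [norm_mul, Real.norm_eq_abs, Real.norm_eq_abs]
    exact mul_le_mul_of_nonneg_right (hb n x hx) (abs_nonneg _)
  · exact ae_of_all _ fun x _ => hc.mul_right _
  · simp_rw [tsum_mul_right]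
    exact hw.abs.const_mul _
  · refine ae_of_all _ fun x hx => ?_
    rw [uIoc_of_le hT] at hx
    exact (hg x hx).mul_right _

lemma hasSum_exp_neg (z : ℝ) :
    HasSum (fun k : ℕ => (-z) ^ k / (k.factorial : ℝ)) (Real.exp (-z)) := by
  rw [Real.exp_eq_exp_ℝ]
  exact NormedSpace.expSeries_div_hasSum_exp (-z)

lemma abs_exp_term_le {z y : ℝ} (hz : 0 ≤ z) (hzy : z ≤ y) (k : ℕ) :
    |(-z) ^ k / (k.factorial : ℝ)| ≤ y ^ k / (k.factorial : ℝ) := by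
  rw [abs_div, abs_pow, abs_neg, abs_of_nonneg hz, Nat.abs_cast]
  gcongr

/-- The power series `γ(s, y) = ∑ₖ (-1)^k y^(s+k) / (k! (s+k))`. -/
lemma hasSum_lowerGamma {s y : ℝ} (hs : 0 < s) (hy : 0 ≤ y) :
    HasSum (fun k : ℕ => (-1 : ℝ) ^ k * y ^ (s + k) / (k.factorial * (s + k)))
      (lowerGamma s y) := by
  have h := hasSum_integral_weight (w := fun t : ℝ => t ^ (s - 1)) (T := y)
    (f := fun k t => (-t) ^ k / (k.factorial : ℝ)) (g := fun t => Real.exp (-t))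
    (c := fun k => y ^ k / (k.factorial : ℝ)) hy
    (intervalIntegral.intervalIntegrable_rpow' (by linarith))
    (fun n => by fun_prop) (fun n x hx => abs_exp_term_le hx.1.le hx.2 n)
    (Real.summable_pow_div_factorial y) (fun x _ => hasSum_exp_neg x)
  have e : lowerGamma s y = ∫ t in (0:ℝ)..y, Real.exp (-t) * t ^ (s - 1) := by
    simp only [lowerGamma, mul_comm]
  rw [e]
  refine h.congr_fun ?_
  intro k
  have hsk : (0:ℝ) < s + k := by positivity
  have e2 : ∫ t in (0:ℝ)..y, (-t) ^ k / (k.factorial : ℝ) * t ^ (s - 1)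
      = ∫ t in (0:ℝ)..y, ((-1) ^ k / (k.factorial : ℝ)) * t ^ (s + k - 1) := by
    apply intervalIntegral.integral_congr_ae
    refine ae_of_all _ fun t ht => ?_
    rw [uIoc_of_le hy] at ht
    have : t ^ (s + k - 1) = t ^ (s - 1) * t ^ k := by
      rw [← Real.rpow_natCast t k, ← Real.rpow_add ht.1]; ring_nf
    simp only [this]
    rw [neg_pow]; ring
  rw [e2, intervalIntegral.integral_const_mul, integral_rpow (Or.inl (by linarith))]
  rw [sub_add_cancel, Real.zero_rpow hsk.ne']
  field_simp
  ring

lemma integral_beta {a b T : ℝ} (ha : 0 < a) (hb : 0 < b) (hT : 0 < T) :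
    ∫ x in (0:ℝ)..T, x ^ (a - 1) * (T - x) ^ (b - 1) = T ^ (a + b - 1) * betaFn a b := by
  have h := Complex.betaIntegral_scaled (a : ℂ) (b : ℂ) hT
  rw [Complex.betaIntegral_eq_Gamma_mul_div _ _ (by simpa) (by simpa)] at h
  rw [← Complex.ofReal_add, Complex.Gamma_ofReal, Complex.Gamma_ofReal, Complex.Gamma_ofReal,
    ← Complex.ofReal_one, ← Complex.ofReal_sub (a + b), ← Complex.ofReal_cpow hT.le] at h
  have e : ∫ x in (0:ℝ)..T, (x : ℂ) ^ ((a : ℂ) - (1 : ℝ)) * ((T : ℂ) - x) ^ ((b : ℂ) - (1 : ℝ))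
      = ((∫ x in (0:ℝ)..T, x ^ (a - 1) * (T - x) ^ (b - 1) : ℝ) : ℂ) := by
    rw [← intervalIntegral.integral_ofReal]
    apply intervalIntegral.integral_congr_ae
    refine ae_of_all _ fun t ht => ?_
    rw [uIoc_of_le hT.le] at ht
    rw [← Complex.ofReal_sub, ← Complex.ofReal_sub, ← Complex.ofReal_sub,
      ← Complex.ofReal_cpow ht.1.le, ← Complex.ofReal_cpow (by linarith [ht.2]),
      ← Complex.ofReal_mul]
  rw [e] at h
  rw [betaFn]
  exact_mod_cast h

lemma Gamma_add_nat {a : ℝ} (ha : 0 < a) (k : ℕ) :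
    Real.Gamma (a + k) = poch a k * Real.Gamma a := by
  induction k with
  | zero => simp [poch]
  | succ k ih =>
    have : (a + (k + 1 : ℕ) : ℝ) = (a + k) + 1 := by push_cast; ring
    rw [this, Real.Gamma_add_one (by positivity), ih, poch, poch, Finset.prod_range_succ]
    ring

lemma poch_pos {a : ℝ} (ha : 0 < a) (k : ℕ) : 0 < poch a k :=
  Finset.prod_pos fun i _ => by positivity

/-- Euler's integral representation of `₁F₁`, scaled to the interval `[0, T]`. -/
lemma integral_weight_hyp1F1 {a c T : ℝ} (ha : 0 < a) (hc : 0 < c) (hT : 0 < T) {β : ℝ}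
    (hβ : 0 < β) :
    ∫ x in (0:ℝ)..T, (T - x) ^ c * (x ^ (a - 1) * Real.exp (-(β * x)))
      = T ^ c * (T ^ a * betaFn (c + 1) a * hyp1F1 a (a + c + 1) (-(β * T))) := by
  have hcont : Continuous fun x : ℝ => (T - x) ^ c :=
    (continuous_const.sub continuous_id).rpow_const fun x => Or.inr hc.le
  have h := hasSum_integral_weight (w := fun x : ℝ => x ^ (a - 1) * (T - x) ^ c) (T := T)
    (f := fun k x => (-(β * x)) ^ k / (k.factorial : ℝ)) (g := fun x => Real.exp (-(β * x)))
    (c := fun k => (β * T) ^ k / (k.factorial : ℝ)) hT.le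
    ((intervalIntegral.intervalIntegrable_rpow' (by linarith)).mul_continuousOn
      hcont.continuousOn)
    (fun n => by fun_prop)
    (fun n x hx => abs_exp_term_le (mul_nonneg hβ.le hx.1.le)
      (mul_le_mul_of_nonneg_left hx.2 hβ.le) n)
    (Real.summable_pow_div_factorial (β * T)) (fun x _ => hasSum_exp_neg (β * x))
  have e : ∫ x in (0:ℝ)..T, (T - x) ^ c * (x ^ (a - 1) * Real.exp (-(β * x)))
      = ∫ x in (0:ℝ)..T, Real.exp (-(β * x)) * (x ^ (a - 1) * (T - x) ^ c) := by
    congr 1 with x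
    ring
  rw [e, ← h.tsum_eq, hyp1F1, ← tsum_mul_left, ← tsum_mul_left]
  congr 1 with k
  have e2 : ∫ x in (0:ℝ)..T, (-(β * x)) ^ k / (k.factorial : ℝ) * (x ^ (a - 1) * (T - x) ^ c)
      = ∫ x in (0:ℝ)..T, ((-β) ^ k / (k.factorial : ℝ)) *
        (x ^ (a + k - 1) * (T - x) ^ (c + 1 - 1)) := by
    apply intervalIntegral.integral_congr_ae
    refine ae_of_all _ fun t ht => ?_
    rw [uIoc_of_le hT.le] at ht
    have : t ^ (a + k - 1) = t ^ (a - 1) * t ^ k := by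
      rw [← Real.rpow_natCast t k, ← Real.rpow_add ht.1]; ring_nf
    simp only [this, add_sub_cancel_right]
    rw [← neg_mul, mul_pow]; ring
  rw [e2, intervalIntegral.integral_const_mul, integral_beta (by positivity) (by positivity) hT]
  have e3 : T ^ (a + k + (c + 1) - 1) = T ^ a * T ^ c * T ^ k := by
    rw [← Real.rpow_natCast T k, ← Real.rpow_add hT, ← Real.rpow_add hT]; ring_nf
  have e4 : betaFn (a + k) (c + 1) = poch a k / poch (a + c + 1) k * betaFn (c + 1) a := by
    rw [betaFn, betaFn, Gamma_add_nat ha, show a + k + (c + 1) = (a + c + 1) + k by ring,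
      Gamma_add_nat (by positivity), show c + 1 + a = a + c + 1 by ring]
    have := (poch_pos (show 0 < a + c + 1 by positivity) k).ne'
    have := (Real.Gamma_pos_of_pos (show 0 < a + c + 1 by positivity)).ne'
    field_simp
  rw [e3, e4, ← neg_mul, mul_pow]
  ring

/-! ### The upper incomplete gamma function -/

lemma integrable_gamma {s : ℝ} (hs : 0 < s) :
    IntegrableOn (fun t : ℝ => t ^ (s - 1) * Real.exp (-t)) (Ioi 0) := by
  simpa only [mul_comm] using Real.GammaIntegral_convergent hs

lemma Gamma_eq' {s : ℝ} (hs : 0 < s) :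
    Real.Gamma s = ∫ t in Ioi (0:ℝ), t ^ (s - 1) * Real.exp (-t) := by
  simp only [Real.Gamma_eq_integral hs, mul_comm]

lemma upperGamma_eq {s y : ℝ} (hs : 0 < s) (hy : 0 ≤ y) :
    upperGamma s y = Real.Gamma s - lowerGamma s y := by
  have h := intervalIntegral.integral_interval_add_Ioi (integrable_gamma hs)
    ((integrable_gamma hs).mono_set (Ioi_subset_Ioi hy))
  rw [Gamma_eq' hs, ← h, upperGamma, lowerGamma]
  ring

lemma upperGamma_nonneg {s y : ℝ} (hy : 0 ≤ y) : 0 ≤ upperGamma s y := by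
  refine setIntegral_nonneg measurableSet_Ioi fun t ht => ?_
  have : 0 ≤ t := hy.trans (le_of_lt ht)
  positivity

lemma upperGamma_le {s y : ℝ} (hs : 0 < s) (hy : 0 ≤ y) : upperGamma s y ≤ Real.Gamma s := by
  rw [Gamma_eq' hs, upperGamma]
  refine setIntegral_mono_set (integrable_gamma hs) ?_ (Ioi_subset_Ioi hy).eventuallyLE
  refine (ae_restrict_iff' measurableSet_Ioi).2 (ae_of_all _ fun t ht => ?_)
  have : 0 < t := ht
  simp only [Pi.zero_apply]
  positivity

/-- Substituting `t = u + y` and using `(u + y)^(s-1) ≥ u^(s-1)`, which needs `1 ≤ s`. -/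
lemma le_upperGamma {s y : ℝ} (hs : 1 ≤ s) (hy : 0 ≤ y) :
    Real.exp (-y) * Real.Gamma s ≤ upperGamma s y := by
  have hs0 : 0 < s := by linarith
  have e : upperGamma s y
      = ∫ u in Ioi (0:ℝ), (u + y) ^ (s - 1) * Real.exp (-(u + y)) := by
    have := (measurePreserving_add_right volume y).setIntegral_preimage_emb
      (MeasurableEquiv.addRight y).measurableEmbedding
      (fun t : ℝ => t ^ (s - 1) * Real.exp (-t)) (Ioi y)
    rw [upperGamma, ← this]
    simp
  have hshift : IntegrableOn (fun u : ℝ => (u + y) ^ (s - 1) * Real.exp (-(u + y))) (Ioi 0) := by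
    have h := (integrable_gamma hs0).mono_set (Ioi_subset_Ioi hy)
    have := (measurePreserving_add_right volume y).integrableOn_comp_preimage
      (MeasurableEquiv.addRight y).measurableEmbedding
      (f := fun t : ℝ => t ^ (s - 1) * Real.exp (-t)) (s := Ioi y)
    rw [← this] at h
    simpa [Function.comp_def] using h
  rw [e, Gamma_eq' hs0, ← integral_const_mul]
  refine setIntegral_mono_on ((integrable_gamma hs0).const_mul _) hshift measurableSet_Ioi ?_
  intro u hu
  have hu : 0 < u := hu
  have h1 : u ^ (s - 1) ≤ (u + y) ^ (s - 1) :=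
    Real.rpow_le_rpow hu.le (by linarith) (by linarith)
  rw [neg_add, Real.exp_add]
  nlinarith [mul_le_mul_of_nonneg_right h1
    (mul_nonneg (Real.exp_pos (-u)).le (Real.exp_pos (-y)).le)]

lemma continuousOn_upperGamma {s : ℝ} (hs : 0 < s) : ContinuousOn (upperGamma s) (Ici 0) := by
  have hc : ContinuousOn (lowerGamma s) (Ici 0) := by
    have : Continuous fun y => ∫ t in (0:ℝ)..y, t ^ (s - 1) * Real.exp (-t) := by
      refine intervalIntegral.continuous_primitive (fun a b => ?_) 0
      exact (intervalIntegral.intervalIntegrable_rpow' (by linarith)).mul_continuousOn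
        (by fun_prop)
    exact this.continuousOn
  exact (continuousOn_const.sub hc).congr fun y hy => upperGamma_eq hs hy

/-! ### Integrals against the weight `x^(α-1) e^(-βx)` -/

lemma intervalIntegrable_weight {a : ℝ} (ha : 0 < a) (β T : ℝ) :
    IntervalIntegrable (fun x : ℝ => x ^ (a - 1) * Real.exp (-(β * x))) volume 0 T :=
  (intervalIntegral.intervalIntegrable_rpow' (by linarith)).mul_continuousOn (by fun_prop)

lemma integral_weight {a β : ℝ} (hβ : 0 < β) {T : ℝ} (hT : 0 < T) :
    ∫ x in (0:ℝ)..T, x ^ (a - 1) * Real.exp (-(β * x)) = lowerGamma a (β * T) / β ^ a := by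
  have h := intervalIntegral.integral_comp_mul_left (a := 0) (b := T)
    (fun t : ℝ => t ^ (a - 1) * Real.exp (-t)) hβ.ne'
  rw [mul_zero, smul_eq_mul] at h
  rw [lowerGamma, eq_div_iff (by positivity)]
  have e : ∫ x in (0:ℝ)..T, (β * x) ^ (a - 1) * Real.exp (-(β * x))
      = β ^ (a - 1) * ∫ x in (0:ℝ)..T, x ^ (a - 1) * Real.exp (-(β * x)) := by
    rw [← intervalIntegral.integral_const_mul]
    apply intervalIntegral.integral_congr_ae
    refine ae_of_all _ fun t ht => ?_
    rw [uIoc_of_le hT.le] at ht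
    rw [Real.mul_rpow hβ.le ht.1.le, mul_assoc]
  rw [e, Real.rpow_sub_one hβ.ne'] at h
  field_simp at h
  linarith

lemma integral_weight_pos {a β T : ℝ} (ha : 0 < a) (hT : 0 < T) :
    0 < ∫ x in (0:ℝ)..T, x ^ (a - 1) * Real.exp (-(β * x)) := by
  refine intervalIntegral.intervalIntegral_pos_of_pos_on (intervalIntegrable_weight ha β T) ?_ hT
  intro x hx
  have := hx.1
  positivity

lemma continuousOn_upperGamma_comp {s ρ T : ℝ} (hs : 0 < s) (hρ : 0 < ρ) :
    ContinuousOn (fun x => upperGamma s (ρ * (T - x))) (Icc 0 T) :=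
  (continuousOn_upperGamma hs).comp (by fun_prop)
    fun x hx => mul_nonneg hρ.le (by linarith [hx.2])

/-- The contribution of a single `Γ(s, ρ(T-x))`; with `s = α+n+1` the right side is the bracket in
the `n`-th term of the expansion. -/
lemma integral_upperGamma_weight {a β ρ T s : ℝ} (ha : 0 < a) (hβ : 0 < β) (hρ : 0 < ρ)
    (hT : 0 < T) (hs : 0 < s) :
    ∫ x in (0:ℝ)..T, upperGamma s (ρ * (T - x)) * (x ^ (a - 1) * Real.exp (-(β * x)))
      = (Real.Gamma s / β ^ a) * lowerGamma a (β * T)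
        - ∑' k : ℕ, ((-1 : ℝ) ^ k * (ρ * T) ^ (s + k) / (k.factorial * (s + k)))
            * (T ^ a * betaFn (s + k + 1) a * hyp1F1 a (a + (s + k) + 1) (-(β * T))) := by
  have hpos : ∀ x ∈ Ioc 0 T, 0 ≤ ρ * (T - x) := fun x hx =>
    mul_nonneg hρ.le (by linarith [hx.2])
  have hw := intervalIntegrable_weight ha β T
  have h := hasSum_integral_weight (T := T)
    (f := fun k x => (-1 : ℝ) ^ k * (ρ * (T - x)) ^ (s + k) / (k.factorial * (s + k)))
    (g := fun x => lowerGamma s (ρ * (T - x)))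
    (c := fun k => (ρ * T) ^ s / s * ((ρ * T) ^ k / (k.factorial : ℝ))) hT.le hw
    (fun k => by
      have : Continuous fun x : ℝ => (ρ * (T - x)) ^ (s + k) :=
        (by fun_prop : Continuous fun x : ℝ => ρ * (T - x)).rpow_const
          fun x => Or.inr (by positivity)
      exact ((this.const_mul _).div_const _).continuousOn)
    (fun k x hx => by
      have h0 := hpos x hx
      rw [abs_div, abs_mul, abs_pow, abs_neg, abs_one, one_pow, one_mul,
        abs_of_nonneg (by positivity : (0:ℝ) ≤ k.factorial * (s + k)),
        abs_of_nonneg (Real.rpow_nonneg h0 _)]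
      have h1 : (ρ * (T - x)) ^ (s + k) ≤ (ρ * T) ^ s * (ρ * T) ^ k := by
        rw [← Real.rpow_natCast (ρ * T) k, ← Real.rpow_add (by positivity)]
        refine Real.rpow_le_rpow h0 ?_ (by positivity)
        exact mul_le_mul_of_nonneg_left (by linarith [hx.1]) hρ.le
      calc (ρ * (T - x)) ^ (s + k) / (k.factorial * (s + k))
          ≤ ((ρ * T) ^ s * (ρ * T) ^ k) / (k.factorial * s) := by
            gcongr
            linarith [(Nat.cast_nonneg k : (0:ℝ) ≤ k)]
        _ = (ρ * T) ^ s / s * ((ρ * T) ^ k / (k.factorial : ℝ)) := by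
            field_simp)
    ((Real.summable_pow_div_factorial (ρ * T)).mul_left _)
    (fun x hx => hasSum_lowerGamma hs (hpos x hx))
  have hU : IntervalIntegrable (fun x => upperGamma s (ρ * (T - x)) *
      (x ^ (a - 1) * Real.exp (-(β * x)))) volume 0 T :=
    hw.continuousOn_mul (by rw [uIcc_of_le hT.le]; exact continuousOn_upperGamma_comp hs hρ)
  have e : ∫ x in (0:ℝ)..T, lowerGamma s (ρ * (T - x)) * (x ^ (a - 1) * Real.exp (-(β * x)))
      = Real.Gamma s * (∫ x in (0:ℝ)..T, x ^ (a - 1) * Real.exp (-(β * x)))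
        - ∫ x in (0:ℝ)..T, upperGamma s (ρ * (T - x)) *
          (x ^ (a - 1) * Real.exp (-(β * x))) := by
    rw [← intervalIntegral.integral_const_mul,
      ← intervalIntegral.integral_sub (hw.const_mul _) hU]
    apply intervalIntegral.integral_congr_ae
    refine ae_of_all _ fun t ht => ?_
    rw [uIoc_of_le hT.le] at ht
    rw [upperGamma_eq hs (hpos t ht)]
    ring
  have e2 : ∑' k : ℕ, ((-1 : ℝ) ^ k * (ρ * T) ^ (s + k) / (k.factorial * (s + k)))
            * (T ^ a * betaFn (s + k + 1) a * hyp1F1 a (a + (s + k) + 1) (-(β * T)))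
      = ∫ x in (0:ℝ)..T, lowerGamma s (ρ * (T - x)) *
          (x ^ (a - 1) * Real.exp (-(β * x))) := by
    rw [← h.tsum_eq]
    congr 1 with k
    have e3 : ∫ x in (0:ℝ)..T, (-1 : ℝ) ^ k * (ρ * (T - x)) ^ (s + k) / (k.factorial * (s + k))
          * (x ^ (a - 1) * Real.exp (-(β * x)))
        = ((-1 : ℝ) ^ k * ρ ^ (s + k) / (k.factorial * (s + k))) *
          ∫ x in (0:ℝ)..T, (T - x) ^ (s + k) * (x ^ (a - 1) * Real.exp (-(β * x))) := by
      rw [← intervalIntegral.integral_const_mul]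
      apply intervalIntegral.integral_congr_ae
      refine ae_of_all _ fun t ht => ?_
      rw [uIoc_of_le hT.le] at ht
      rw [Real.mul_rpow hρ.le (by linarith [ht.2])]
      ring
    rw [e3, integral_weight_hyp1F1 ha (by positivity) hT hβ, Real.mul_rpow hρ.le hT.le]
    ring
  rw [e2, e, integral_weight hβ hT]
  ring

/-! ### Convergence and divergence of the series over `n` -/

/-- The ratio of consecutive terms is `|ρ-β|/ρ · (α+n)/(n+1)`. -/
lemma summable_coeff {α β ρ : ℝ} (hα : 0 < α) (hρ : 0 < ρ) (h : |ρ - β| < ρ) :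
    Summable fun n : ℕ => |(ρ - β) ^ n / (n.factorial * (α + n) * ρ ^ (α + (n : ℝ) + 1))|
      * Real.Gamma (α + n + 1) := by
  set q := |ρ - β| / ρ with hq
  have hq0 : 0 ≤ q := by positivity
  have hq1 : q < 1 := (div_lt_one hρ).2 h
  refine summable_of_ratio_norm_eventually_le (r := (1 + q) / 2) (by linarith) ?_
  -- for such `n`, `q (α + n) ≤ (1 + q)/2 · (n + 1)`
  filter_upwards [Filter.eventually_ge_atTop ⌈2 * q * α / (1 - q)⌉₊] with n hn
  have hn' : 2 * q * α / (1 - q) ≤ n := Nat.ceil_le.1 hn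
  rw [div_le_iff₀ (by linarith)] at hn'
  have hkey : q * (α + n) ≤ (1 + q) / 2 * (n + 1) := by nlinarith
  have hG := Real.Gamma_pos_of_pos (show 0 < α + n + 1 by positivity)
  have hG1 : Real.Gamma (α + (n + 1 : ℕ) + 1) = (α + n + 1) * Real.Gamma (α + n + 1) := by
    rw [← Real.Gamma_add_one (by positivity)]; push_cast; ring_nf
  have hr : ρ ^ (α + ((n + 1 : ℕ) : ℝ) + 1) = ρ ^ (α + (n : ℝ) + 1) * ρ := by
    rw [← Real.rpow_add_one hρ.ne']; push_cast; ring_nf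
  rw [hG1, hr]
  simp only [norm_mul, Real.norm_eq_abs, abs_abs, abs_div, abs_pow, abs_of_pos hG,
    abs_of_pos (show 0 < α + n + 1 by positivity),
    abs_of_pos (show 0 < (n.factorial : ℝ) * (α + n) * ρ ^ (α + (n : ℝ) + 1) by positivity),
    abs_of_pos (show 0 < ((n + 1).factorial : ℝ) * (α + (n + 1 : ℕ)) *
      (ρ ^ (α + (n : ℝ) + 1) * ρ) by positivity)]
  have e : |ρ - β| = q * ρ := by rw [hq]; field_simp
  have e2 : |ρ - β| ^ (n + 1) / (((n + 1).factorial : ℝ) * (α + (n + 1 : ℕ)) *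
        (ρ ^ (α + (n : ℝ) + 1) * ρ)) * ((α + n + 1) * Real.Gamma (α + n + 1))
      = (q * (α + n) / (n + 1)) * (|ρ - β| ^ n / ((n.factorial : ℝ) * (α + n) *
        ρ ^ (α + (n : ℝ) + 1)) * Real.Gamma (α + n + 1)) := by
    rw [pow_succ, Nat.factorial_succ]
    nth_rewrite 2 [e]
    have : (0:ℝ) < α + n + 1 := by positivity
    have : (0:ℝ) < α + n := by positivity
    have : α + ((n:ℝ) + 1) = α + n + 1 := by ring
    push_cast
    rw [this]
    field_simp
  rw [e2]
  refine mul_le_mul_of_nonneg_right ?_ (by positivity)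
  rw [div_le_iff₀ (by positivity)]
  exact hkey

lemma factorial_mul_Gamma_le {α : ℝ} (hα : 0 < α) (n : ℕ) :
    n.factorial * Real.Gamma (α + 1) ≤ Real.Gamma (α + n + 1) := by
  induction n with
  | zero => simp
  | succ n ih =>
    have hG1 : Real.Gamma (α + (n + 1 : ℕ) + 1) = (α + n + 1) * Real.Gamma (α + n + 1) := by
      rw [← Real.Gamma_add_one (by positivity)]; push_cast; ring_nf
    have hG := Real.Gamma_pos_of_pos (show 0 < α + n + 1 by positivity)
    rw [hG1, Nat.factorial_succ]
    push_cast
    nlinarith [mul_le_mul_of_nonneg_left ih (show (0:ℝ) ≤ n + 1 by positivity)]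

/-- Outside the disc of convergence, boundary included, the absolute values of the terms
dominate a multiple of the harmonic series: `Γ(α+n+1) ≥ n! Γ(α+1)` and `α + n ≤ (α+1)(n+1)`. -/
lemma not_summable_coeff {α β ρ κ : ℝ} (hα : 0 < α) (hρ : 0 < ρ) (h : ρ ≤ |ρ - β|)
    (hκ : 0 < κ) {u : ℕ → ℝ} (hu : ∀ n : ℕ, κ * Real.Gamma (α + n + 1) ≤ u n) :
    ¬ Summable fun n : ℕ =>
      ((ρ - β) ^ n / (n.factorial * (α + n) * ρ ^ (α + (n : ℝ) + 1))) * u n := by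
  intro hs
  have hG := Real.Gamma_pos_of_pos (show 0 < α + 1 by positivity)
  set C := κ * Real.Gamma (α + 1) / ((α + 1) * ρ ^ (α + 1)) with hC
  have hC0 : 0 < C := by positivity
  have h1 : Summable fun n : ℕ => C * (1 / ((n + 1 : ℕ) : ℝ)) := by
    refine Summable.of_nonneg_of_le (fun n => by positivity) (fun n => ?_) hs.abs
    have hun : κ * (n.factorial * Real.Gamma (α + 1)) ≤ u n :=
      (mul_le_mul_of_nonneg_left (factorial_mul_Gamma_le hα n) hκ.le).trans (hu n)
    have hun0 : 0 ≤ u n := le_trans (by positivity) hun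
    have hr : ρ ^ (α + (n : ℝ) + 1) = ρ ^ (α + 1) * ρ ^ n := by
      rw [← Real.rpow_natCast ρ n, ← Real.rpow_add hρ]; ring_nf
    rw [hr, abs_mul, abs_div, abs_of_nonneg hun0, abs_pow,
      abs_of_pos (show 0 < (n.factorial : ℝ) * (α + n) * (ρ ^ (α + 1) * ρ ^ n) by positivity)]
    have hα1 : α + n ≤ (α + 1) * (n + 1) := by
      nlinarith [mul_nonneg hα.le (Nat.cast_nonneg n : (0:ℝ) ≤ n)]
    calc C * (1 / ((n + 1 : ℕ) : ℝ))
        = ρ ^ n / (n.factorial * ((α + 1) * (n + 1)) * (ρ ^ (α + 1) * ρ ^ n))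
          * (κ * (n.factorial * Real.Gamma (α + 1))) := by
          rw [hC]; push_cast; field_simp
      _ ≤ |ρ - β| ^ n / (n.factorial * (α + n) * (ρ ^ (α + 1) * ρ ^ n)) * u n := by
          gcongr
  rw [summable_mul_left_iff hC0.ne'] at h1
  exact Real.not_summable_one_div_natCast
    ((summable_nat_add_iff (f := fun n : ℕ => 1 / (n : ℝ)) 1).1 h1)

/-! ### Exchanging sum and integral -/

theorem f1_integral (α β ρ Tc : ℝ) (hα : 0 < α) (hβ : 0 < β) (hρ : 0 < ρ) (hTc : 0 < Tc) :
    ∫ x in (0:ℝ)..Tc,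
        ((β ^ α / Real.Gamma α) * ∑' n : ℕ, ((ρ - β) ^ n / (n.factorial * (α + n)))
            * upperGamma (α + n + 1) (ρ * (Tc - x)) / ρ ^ (α + (n : ℝ) + 1))
          * (β ^ α * x ^ (α - 1) * Real.exp (-(β * x)) / Real.Gamma α) =
      (β ^ (2 * α) / Real.Gamma α ^ 2)
        * ∑' n : ℕ, ((ρ - β) ^ n / (n.factorial * (α + n) * ρ ^ (α + (n : ℝ) + 1)))
            * ((Real.Gamma (α + n + 1) / β ^ α) * lowerGamma α (β * Tc)
              - ∑' k : ℕ, ((-1 : ℝ) ^ k * (ρ * Tc) ^ (α + (n : ℝ) + k + 1)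
                    / (k.factorial * (α + n + k + 1)))
                  * (Tc ^ α * betaFn (α + n + k + 2) α
                    * hyp1F1 α (2 * α + n + k + 2) (-(β * Tc)))) := by
  set A : ℕ → ℝ := fun n => (ρ - β) ^ n / (n.factorial * (α + n) * ρ ^ (α + (n : ℝ) + 1)) with hA
  set w : ℝ → ℝ := fun x => x ^ (α - 1) * Real.exp (-(β * x)) with hw
  set G : ℕ → ℝ → ℝ := fun n x => upperGamma (α + n + 1) (ρ * (Tc - x)) with hG
  have hs : ∀ n : ℕ, 0 < α + n + 1 := fun n => by positivity
  have hpos : ∀ x ∈ Icc 0 Tc, 0 ≤ ρ * (Tc - x) := fun x hx =>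
    mul_nonneg hρ.le (by linarith [hx.2])
  have hwint : IntervalIntegrable w volume 0 Tc := intervalIntegrable_weight hα β Tc
  have hGint : ∀ n, IntervalIntegrable (fun x => G n x * w x) volume 0 Tc := fun n =>
    hwint.continuousOn_mul
      (by rw [uIcc_of_le hTc.le]; exact continuousOn_upperGamma_comp (hs n) hρ)
  have hJ : ∀ n : ℕ, (Real.Gamma (α + n + 1) / β ^ α) * lowerGamma α (β * Tc)
              - ∑' k : ℕ, ((-1 : ℝ) ^ k * (ρ * Tc) ^ (α + (n : ℝ) + k + 1)
                    / (k.factorial * (α + n + k + 1)))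
                  * (Tc ^ α * betaFn (α + n + k + 2) α
                    * hyp1F1 α (2 * α + n + k + 2) (-(β * Tc)))
      = ∫ x in (0:ℝ)..Tc, G n x * w x := by
    intro n
    rw [hG, hw, integral_upperGamma_weight hα hβ hρ hTc (hs n)]
    congr 2 with k
    rw [show α + n + 1 + (k:ℝ) = α + n + k + 1 by ring,
      show α + n + k + 1 + 1 = α + n + (k:ℝ) + 2 by ring,
      show α + (α + n + k + 1) + 1 = 2 * α + n + (k:ℝ) + 2 by ring]
  have hL : ∀ x, ((β ^ α / Real.Gamma α) * ∑' n : ℕ, ((ρ - β) ^ n / (n.factorial * (α + n)))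
            * upperGamma (α + n + 1) (ρ * (Tc - x)) / ρ ^ (α + (n : ℝ) + 1))
          * (β ^ α * x ^ (α - 1) * Real.exp (-(β * x)) / Real.Gamma α)
      = (β ^ (2 * α) / Real.Gamma α ^ 2) * ((∑' n, A n * G n x) * w x) := by
    intro x
    have e : ∀ n : ℕ, ((ρ - β) ^ n / (n.factorial * (α + n)))
            * upperGamma (α + n + 1) (ρ * (Tc - x)) / ρ ^ (α + (n : ℝ) + 1) = A n * G n x := by
      intro n
      simp only [hA, hG]
      rw [← div_div _ ((n.factorial : ℝ) * (α + n))]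
      exact mul_div_right_comm _ _ _
    simp only [e, hw]
    rw [two_mul, Real.rpow_add hβ]
    ring
  simp only [hL, hJ]
  rw [intervalIntegral.integral_const_mul]
  congr 1
  rcases lt_or_ge |ρ - β| ρ with hlt | hge
  · have hsum := summable_coeff hα hρ hlt
    have hbd : ∀ n : ℕ, ∀ x ∈ Ioc 0 Tc, |A n * G n x| ≤ |A n| * Real.Gamma (α + n + 1) := by
      intro n x hx
      have h0 := hpos x (Ioc_subset_Icc_self hx)
      rw [abs_mul, abs_of_nonneg (upperGamma_nonneg h0)]
      exact mul_le_mul_of_nonneg_left (upperGamma_le (hs n) h0) (abs_nonneg _)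
    have h := hasSum_integral_weight (f := fun n x => A n * G n x)
      (g := fun x => ∑' n, A n * G n x) hTc.le hwint
      (fun n => continuousOn_const.mul (continuousOn_upperGamma_comp (hs n) hρ)) hbd hsum
      (fun x hx => (Summable.of_abs (Summable.of_nonneg_of_le (fun n => abs_nonneg _)
        (fun n => hbd n x hx) hsum)).hasSum)
    rw [← h.tsum_eq]
    congr 1 with n
    rw [← intervalIntegral.integral_const_mul]
    exact intervalIntegral.integral_congr fun x _ => mul_assoc _ _ _
  · -- neither series is summable, so both `tsum`s are `0`
    have hlow : ∀ n : ℕ, ∀ x ∈ Icc 0 Tc,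
        Real.exp (-(ρ * Tc)) * Real.Gamma (α + n + 1) ≤ G n x := by
      intro n x hx
      have hn : (1:ℝ) ≤ α + n + 1 := by
        have : (0:ℝ) ≤ n := Nat.cast_nonneg n
        linarith
      refine le_trans ?_ (le_upperGamma hn (hpos x hx))
      refine mul_le_mul_of_nonneg_right (Real.exp_le_exp.2 ?_) (Real.Gamma_pos_of_pos (hs n)).le
      nlinarith [hx.1]
    have hR : ∑' n, A n * ∫ x in (0:ℝ)..Tc, G n x * w x = 0 := by
      refine tsum_eq_zero_of_not_summable (not_summable_coeff hα hρ hge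
        (κ := Real.exp (-(ρ * Tc)) * ∫ x in (0:ℝ)..Tc, w x)
        (mul_pos (Real.exp_pos _) (integral_weight_pos hα hTc)) fun n => ?_)
      rw [mul_right_comm, ← intervalIntegral.integral_const_mul]
      refine intervalIntegral.integral_mono_on hTc.le (hwint.const_mul _) (hGint n) ?_
      intro x hx
      refine mul_le_mul_of_nonneg_right (hlow n x hx) ?_
      have := hx.1
      simp only [hw]
      positivity
    rw [hR]
    have hz : ∀ x ∈ uIcc 0 Tc, (∑' n, A n * G n x) * w x = (fun _ => (0:ℝ)) x := by
      intro x hx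
      rw [uIcc_of_le hTc.le] at hx
      rw [tsum_eq_zero_of_not_summable
        (not_summable_coeff hα hρ hge (Real.exp_pos _) fun n => hlow n x hx), zero_mul]
    rw [intervalIntegral.integral_congr hz]
    simp
end

section
/- For all real a, z and all real b > 0, the Kummer transformation ₁F₁(a; b; z) = e^z · ₁F₁(b − a; b; −z) holds. -/
/-!
Multiplying the power series of `e^z` and `₁F₁(b − a; b; −z)` (both converge absolutely) and
comparing coefficients of `z^n`, the claim becomes the Chu–Vandermonde identity
`∑_j C(n, j) (-1)^j (c)_j / (b)_j = (b − c)_n / (b)_n` with `c = b − a`. That identity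
(`sum_choose_poch`) follows by induction on `n` from Pascal's rule, with `b` and `c` shifted
by one in the induction hypothesis.

Absolute convergence comes from comparison with an exponential series: for `b > 0` each factor
of `(a)_k / (b)_k` is bounded by `|a| / b + 1`.
-/

open MeasureTheory Real Set

lemma poch_succ (a : ℝ) (k : ℕ) : poch a (k + 1) = poch a k * (a + k) := by
  simp [poch, Finset.prod_range_succ]

lemma poch_succ_left (a : ℝ) (k : ℕ) : poch a (k + 1) = a * poch (a + 1) k := by
  simp only [poch, Finset.prod_range_succ', Nat.cast_add, Nat.cast_one, Nat.cast_zero, add_zero]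
  rw [mul_comm]
  congr 1
  exact Finset.prod_congr rfl fun i _ => by ring

lemma poch_pos_s10 {b : ℝ} (hb : 0 < b) (k : ℕ) : 0 < poch b k :=
  Finset.prod_pos fun i _ => by positivity

lemma abs_poch_div_le (a : ℝ) {b : ℝ} (hb : 0 < b) (k : ℕ) :
    |poch a k / poch b k| ≤ (|a| / b + 1) ^ k := by
  induction k with
  | zero => simp [poch]
  | succ k ih =>
    have hbk : 0 < b + k := by positivity
    have hfac : |(a + k) / (b + k)| ≤ |a| / b + 1 := by
      rw [abs_div, abs_of_pos hbk, div_le_iff₀ hbk]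
      have h1 : |a + k| ≤ |a| + k := by
        simpa using abs_add_le a (k : ℝ)
      have h2 : (|a| / b + 1) * (b + k) = |a| + k + (|a| / b * k + b) := by
        field_simp
        ring
      have h3 : 0 ≤ |a| / b * k + b := by positivity
      linarith
    rw [poch_succ, poch_succ, mul_div_mul_comm, abs_mul, pow_succ]
    exact mul_le_mul ih hfac (abs_nonneg _) (by positivity)

lemma summable_norm_hyp1F1 (a z : ℝ) {b : ℝ} (hb : 0 < b) :
    Summable fun k : ℕ => ‖(poch a k / poch b k) * z ^ k / (k.factorial : ℝ)‖ := by
  refine Summable.of_nonneg_of_le (fun _ => norm_nonneg _) (fun k => ?_)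
    (Real.summable_pow_div_factorial ((|a| / b + 1) * |z|))
  rw [Real.norm_eq_abs, abs_div, abs_mul, abs_pow, Nat.abs_cast, mul_pow]
  gcongr
  exact abs_poch_div_le a hb k

/-- The Chu–Vandermonde identity `₂F₁(-n, c; b; 1) = (b - c)_n / (b)_n`. -/
lemma sum_choose_poch (n : ℕ) : ∀ (c : ℝ) {b : ℝ}, 0 < b →
    ∑ p ∈ Finset.HasAntidiagonal.antidiagonal n, (n.choose p.1 : ℝ) *
      ((-1) ^ p.1 * (poch c p.1 / poch b p.1)) =
      poch (b - c) n / poch b n := by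
  induction n with
  | zero => intro c b _; simp [poch]
  | succ n ih =>
    intro c b hb
    rw [Finset.sum_antidiagonal_choose_succ_mul
      (fun i _ => (-1 : ℝ) ^ i * (poch c i / poch b i)), ih c hb]
    have hshift : ∑ p ∈ Finset.HasAntidiagonal.antidiagonal n, (n.choose p.2 : ℝ) *
        ((-1) ^ (p.1 + 1) * (poch c (p.1 + 1) / poch b (p.1 + 1))) =
        -(c / b) * (poch (b - c) n / poch (b + 1) n) := by
      have h := ih (c + 1) (b := b + 1) (by positivity)
      rw [add_sub_add_right_eq_sub] at h
      rw [← h, Finset.mul_sum]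
      refine Finset.sum_congr rfl fun p hp => ?_
      rw [Nat.choose_symm_of_eq_add (Finset.HasAntidiagonal.mem_antidiagonal.mp hp).symm,
        poch_succ_left, poch_succ_left, mul_div_mul_comm]
      ring
    rw [hshift]
    have hb0 := hb.ne'
    have h1 := (poch_pos_s10 hb n).ne'
    have h2 := (poch_pos_s10 (show 0 < b + 1 by positivity) n).ne'
    have h3 := (poch_pos_s10 hb (n + 1)).ne'
    -- the two expressions for `(b)_{n+1}` bring both fractions over a common denominator
    have e : poch b n * (b + n) = b * poch (b + 1) n := by
      rw [← poch_succ, poch_succ_left]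
    have hbn : b + n ≠ 0 := by positivity
    have t1 : poch (b - c) n / poch b n = poch (b - c) n * (b + n) / poch b (n + 1) := by
      rw [poch_succ, mul_div_mul_right _ _ hbn]
    have t2 : -(c / b) * (poch (b - c) n / poch (b + 1) n) =
        -(c * poch (b - c) n) / poch b (n + 1) := by
      rw [poch_succ_left]
      field_simp
    rw [t1, t2, poch_succ (b - c), ← add_div]
    ring

/-- Kummer's transformation `₁F₁(a; b; z) = e^z ₁F₁(b − a; b; −z)`. -/
theorem hyp1F1_kummer (a b z : ℝ) (hb : 0 < b) :
    hyp1F1 a b z = Real.exp z * hyp1F1 (b - a) b (-z) := by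
  have hexp : Real.exp z = ∑' k : ℕ, z ^ k / (k.factorial : ℝ) := by
    rw [Real.exp_eq_exp_ℝ, NormedSpace.exp_eq_tsum_div]
  rw [hexp, mul_comm]
  unfold hyp1F1
  rw [tsum_mul_tsum_eq_tsum_sum_antidiagonal_of_summable_norm
    (summable_norm_hyp1F1 (b - a) (-z) hb) (Real.summable_pow_div_factorial z).norm]
  refine tsum_congr fun n => ?_
  have h := sum_choose_poch n (b - a) hb
  rw [sub_sub_cancel] at h
  rw [← h, Finset.sum_mul, Finset.sum_div]
  refine Finset.sum_congr rfl fun p hp => ?_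
  obtain rfl := Finset.HasAntidiagonal.mem_antidiagonal.mp hp
  rw [Nat.cast_add_choose, neg_pow z, pow_add]
  have h0 : ((p.1 + p.2).factorial : ℝ) ≠ 0 := by positivity
  have hp1 := (poch_pos_s10 hb p.1).ne'
  field_simp
end

section
/- For every real n > 2 and every s > 0, ∫₀^∞ (1 − 1/(1 + s r^(−n))) r dr = π s^(2/n) / (n sin(2π/n)). Consequently, for a homogeneous density λ > 0 of interferers with Rayleigh fading, the Laplace transform of the interference satisfies L_I(s) = exp(−2πλ ∫₀^∞ (1 − 1/(1 + s r^(−n))) r dr) = exp(−λ π² s^(2/n) · 2/(n sin(2π/n))). -/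
/-!
Writing the integrand as `s r / (r ^ n + s)` and substituting `r ^ n = s x` reduces the integral to
`s ^ (2 / n) / n * ∫₀^∞ x ^ (a - 1) / (1 + x) dx` with `a = 2 / n ∈ (0, 1)`
(`integral_interference`). The remaining integral is `B(a, 1 - a) = Γ(a) Γ(1 - a) = π / sin (π a)`
(`integral_rpow_div_one_add`). The Laplace transform identity follows by inserting this value in
the exponent.
-/

open MeasureTheory Real Set

/-- Euler's Mellin integral. The substitution `x = t / (1 - t)` turns it into the Beta integral
`B(a, 1 - a) = Γ(a) Γ(1 - a)`, which the reflection formula evaluates. -/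
lemma integral_rpow_div_one_add (a : ℝ) (ha : 0 < a) (ha1 : a < 1) :
    ∫ x in Ioi (0 : ℝ), x ^ (a - 1) / (1 + x) = π / sin (π * a) := by
  have hB := ProbabilityTheory.beta_eq_betaIntegralReal a (1 - a) ha (by linarith)
  have himg : (fun t : ℝ => t / (1 - t)) '' Ioo 0 1 = Ioi 0 := by
    ext x
    constructor
    · rintro ⟨t, ⟨h0, h1⟩, rfl⟩
      exact div_pos h0 (by linarith)
    · intro hx
      have hx : 0 < x := hx
      refine ⟨x / (1 + x), ⟨by positivity, by rw [div_lt_one (by positivity)]; linarith⟩, ?_⟩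
      have : 1 - x / (1 + x) = 1 / (1 + x) := by field_simp; ring
      simp only [this]
      field_simp
  have hinj : InjOn (fun t : ℝ => t / (1 - t)) (Ioo 0 1) := by
    intro x hx y hy h
    have h1 : 1 - x ≠ 0 := by linarith [hx.2]
    have h2 : 1 - y ≠ 0 := by linarith [hy.2]
    simp only at h
    rw [div_eq_div_iff h1 h2] at h
    linarith
  have hder : ∀ t ∈ Ioo (0 : ℝ) 1,
      HasDerivWithinAt (fun t : ℝ => t / (1 - t)) (1 / (1 - t) ^ 2) (Ioo 0 1) t := by
    intro t ht
    have h1 : 1 - t ≠ 0 := by linarith [ht.2]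
    have hd := ((hasDerivAt_id t).div ((hasDerivAt_id t).const_sub 1) h1).hasDerivWithinAt
      (s := Ioo 0 1)
    have he : (1 * (1 - id t) - id t * -1) / (1 - id t) ^ 2 = 1 / (1 - t) ^ 2 := by simp
    rw [he] at hd
    exact hd
  have key := integral_image_eq_integral_abs_deriv_smul measurableSet_Ioo hder hinj
    (fun x => x ^ (a - 1) / (1 + x))
  rw [himg] at key
  have hreal : ProbabilityTheory.beta a (1 - a) = π / sin (π * a) := by
    rw [ProbabilityTheory.beta, ← Real.Gamma_mul_Gamma_one_sub]
    simp
  have hint : (Complex.betaIntegral a ((1 - a : ℝ) : ℂ)) =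
      ((∫ t in Ioo (0 : ℝ) 1, t ^ (a - 1) * (1 - t) ^ (-a) : ℝ) : ℂ) := by
    rw [Complex.betaIntegral, intervalIntegral.integral_of_le zero_le_one,
      integral_Ioc_eq_integral_Ioo, ← integral_complex_ofReal]
    refine setIntegral_congr_fun measurableSet_Ioo fun t ht => ?_
    have h1 : 0 ≤ 1 - t := by linarith [ht.2]
    rw [Complex.ofReal_mul, Complex.ofReal_cpow ht.1.le, Complex.ofReal_cpow h1]
    push_cast
    congr 2
    ring
  rw [key, ← hreal, hB, hint, Complex.ofReal_re]
  refine setIntegral_congr_fun measurableSet_Ioo fun t ht => ?_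
  have h1 : 0 < 1 - t := by linarith [ht.2]
  have h2 : 1 + t / (1 - t) = 1 / (1 - t) := by field_simp; ring
  have h3 : (1 - t) ^ (-a) = ((1 - t) ^ (a - 1))⁻¹ / (1 - t) := by
    rw [← rpow_neg h1.le, ← rpow_sub_one h1.ne']
    congr 1
    ring
  have h4 : (1 - t) ^ (a - 1) ≠ 0 := (rpow_pos_of_pos h1 _).ne'
  simp only [smul_eq_mul]
  rw [h2, h3, div_rpow ht.1.le h1.le, abs_of_pos (by positivity)]
  field_simp

/-- With `u = r ^ n` and then `u = s x`, `s r / (r ^ n + s) dr` becomes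
`s ^ (2 / n) / n` times `x ^ (2 / n - 1) / (1 + x) dx`. -/
lemma integral_interference (n s : ℝ) (hn : 2 < n) (hs : 0 < s) :
    ∫ r in Ioi (0 : ℝ), (1 - 1 / (1 + s * r ^ (-n))) * r =
      π * s ^ (2 / n) / (n * sin (2 * π / n)) := by
  have hn0 : 0 < n := by linarith
  have hM := integral_rpow_div_one_add (2 / n) (by positivity) (by rwa [div_lt_one hn0])
  have hscale := integral_comp_mul_left_Ioi (fun x : ℝ => x ^ (2 / n - 1) / (1 + x)) 0
    (inv_pos.mpr hs)
  rw [mul_zero, hM, ← integral_comp_rpow_Ioi_of_pos hn0] at hscale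
  have hpt : ∀ r ∈ Ioi (0 : ℝ), (1 - 1 / (1 + s * r ^ (-n))) * r =
      s ^ (2 / n) / (n * s) * ((n * r ^ (n - 1)) •
        ((s⁻¹ * r ^ n) ^ (2 / n - 1) / (1 + s⁻¹ * r ^ n))) := by
    intro r hr
    have hr : 0 < r := hr
    have hrn : 0 < r ^ n := rpow_pos_of_pos hr n
    have hsp : 0 < s ^ (2 / n) := rpow_pos_of_pos hs _
    have e1 : (r ^ n) ^ (2 / n - 1) = r ^ 2 / r ^ n := by
      rw [← rpow_mul hr.le, ← rpow_natCast r 2, ← rpow_sub hr]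
      congr 1
      push_cast
      field_simp
    rw [smul_eq_mul, mul_rpow (by positivity) hrn.le, e1, inv_rpow hs.le,
      rpow_sub_one hs.ne', rpow_sub_one hr.ne', rpow_neg hr.le]
    field_simp
    ring
  rw [setIntegral_congr_fun measurableSet_Ioi hpt, integral_const_mul, hscale,
    show π * (2 / n) = 2 * π / n by ring, smul_eq_mul, inv_inv]
  field_simp

theorem interference_integral_and_laplace (n s : ℝ) (hn : 2 < n) (hs : 0 < s) :
    (∫ r in Set.Ioi (0 : ℝ), (1 - 1 / (1 + s * r ^ (-n))) * r =
      Real.pi * s ^ (2 / n) / (n * Real.sin (2 * Real.pi / n))) ∧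
    ∀ lam : ℝ, 0 < lam →
      Real.exp (-(2 * Real.pi * lam) * ∫ r in Set.Ioi (0 : ℝ), (1 - 1 / (1 + s * r ^ (-n))) * r)
        = Real.exp (-(lam * Real.pi ^ 2 * s ^ (2 / n)) * (2 / (n * Real.sin (2 * Real.pi / n)))) := by
  have hI := integral_interference n s hn hs
  refine ⟨hI, fun lam _ => ?_⟩
  rw [hI]
  congr 1
  ring
end
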